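/- arXiv:2205.02740 — 5 statements merged into one kernel-verified Lean document; each statement's English description precedes it below -/
import Mathlib

section
/- Let T_L be the left shift operator on ℓ², defined by (T_L x)_n = x_{n+1}, and let I be the identity operator on ℓ². Then I + T_L is a P-operator relative to the standard orthonormal basis of ℓ²: for every x ∈ ℓ², if x_n·((I + T_L) x)_n ≤ 0 for all n, then x = 0. -/
/-- `I + T_L` is a P-operator on `ℓ²` relative to the standard orthonormal basis, where
`T_L` is the left shift operator. -/
theorem id_add_leftShift_pOperator
    (T : lp (fun _ : ℕ => ℝ) 2 →L[ℝ] lp (fun _ : ℕ => ℝ) 2)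
    (hT : ∀ (x : lp (fun _ : ℕ => ℝ) 2) (n : ℕ), T x n = x (n + 1)) :
    ∀ x : lp (fun _ : ℕ => ℝ) 2,
      (∀ n : ℕ, x n * (ContinuousLinearMap.id ℝ (lp (fun _ : ℕ => ℝ) 2) + T) x n ≤ 0) →
      x = 0 := by
  intro x hx
  have hs := (lp.memℓp x).summable (by norm_num)
  have ht := hs.tendsto_atTop_zero
  have hm : Monotone (fun n => ‖x n‖ ^ (2 : ENNReal).toReal) := by
    refine monotone_nat_of_le_succ fun n => ?_
    have h : x n * (x n + T x n) ≤ 0 := hx n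
    rw [hT] at h
    have h2 : ‖x n‖ ≤ ‖x (n + 1)‖ := by
      rw [Real.norm_eq_abs, Real.norm_eq_abs]
      by_contra! hc
      have h3 : |x n| * |x (n + 1)| < |x n| * |x n| :=
        mul_lt_mul_of_pos_left hc (lt_of_le_of_lt (abs_nonneg _) hc)
      rw [← abs_mul, abs_mul_abs_self] at h3
      have h4 := neg_abs_le (x n * x (n + 1))
      nlinarith
    exact Real.rpow_le_rpow (norm_nonneg _) h2 (by norm_num)
  ext n
  have h := hm.ge_of_tendsto ht n
  have h' : ‖x n‖ ^ (2 : ENNReal).toReal ≤ 0 := h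
  have h2 : (2 : ENNReal).toReal = ((2 : ℕ) : ℝ) := by norm_num
  rw [h2, Real.rpow_natCast] at h'
  have h3 : ‖x n‖ = 0 := by nlinarith [norm_nonneg (x n)]
  simpa using h3
end

section
/- Let T be the bounded linear operator on ℓ² defined by (T x)_0 = x_0 and (T x)_{n+1} = 2 x_n + x_{n+1}, and let U be the unitary operator on ℓ² acting on each consecutive pair of coordinates by (U x)_{2k} = (x_{2k} + x_{2k+1})/√2 and (U x)_{2k+1} = (x_{2k} − x_{2k+1})/√2. Then T is not a P-operator relative to the orthonormal basis {U e_n}: there exists a nonzero x ∈ ℓ² (e.g., x = (1, −1, 0, 0, …)) such that ⟨x, U e_n⟩·⟨T x, U e_n⟩ ≤ 0 for all n. -/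
local notation "⟪" x ", " y "⟫" => @inner ℝ _ _ x y

/-- The operator `T` on `ℓ²` given by `(Tx)_0 = x_0`, `(Tx)_{n+1} = 2 x_n + x_{n+1}` is not
a P-operator relative to the orthonormal basis `{U e_n}`, where `U` is the unitary operator
acting as a Hadamard rotation on each consecutive pair of coordinates and `{e_n}` is the
standard orthonormal basis. -/
theorem lower_bidiagonal_not_pOperator_rotated_basis
    (T U : lp (fun _ : ℕ => ℝ) 2 →L[ℝ] lp (fun _ : ℕ => ℝ) 2)
    (hT0 : ∀ x : lp (fun _ : ℕ => ℝ) 2, T x 0 = x 0)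
    (hT : ∀ (x : lp (fun _ : ℕ => ℝ) 2) (n : ℕ), T x (n + 1) = 2 * x n + x (n + 1))
    (hUunitary : U ∈ unitary (lp (fun _ : ℕ => ℝ) 2 →L[ℝ] lp (fun _ : ℕ => ℝ) 2))
    (hU0 : ∀ (x : lp (fun _ : ℕ => ℝ) 2) (k : ℕ),
      U x (2 * k) = (x (2 * k) + x (2 * k + 1)) / Real.sqrt 2)
    (hU1 : ∀ (x : lp (fun _ : ℕ => ℝ) 2) (k : ℕ),
      U x (2 * k + 1) = (x (2 * k) - x (2 * k + 1)) / Real.sqrt 2) :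
    ∃ x : lp (fun _ : ℕ => ℝ) 2, x ≠ 0 ∧ ∀ n : ℕ,
      ⟪x, U (lp.single 2 n (1 : ℝ))⟫ * ⟪T x, U (lp.single 2 n (1 : ℝ))⟫ ≤ 0 := by
  set x : lp (fun _ : ℕ => ℝ) 2 := lp.single 2 0 (1 : ℝ) - lp.single 2 1 (1 : ℝ) with hx
  have hs : ∀ m n : ℕ, (lp.single 2 m (1 : ℝ) : lp (fun _ : ℕ => ℝ) 2) n
      = if n = m then 1 else 0 := by
    intro m n
    rw [lp.single_apply]
    simp [Pi.single_apply]
  have hxn : ∀ n, x n = (if n = 0 then 1 else 0) - (if n = 1 then 1 else 0) := by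
    intro n
    rw [hx, lp.coeFn_sub, Pi.sub_apply, hs, hs]
  have hin : ∀ y : lp (fun _ : ℕ => ℝ) 2, ⟪x, y⟫ = y 0 - y 1 := by
    intro y
    rw [hx, inner_sub_left, lp.inner_single_left, lp.inner_single_left]
    simp
  refine ⟨x, ?_, ?_⟩
  · intro h
    have h0 := hxn 0
    rw [h] at h0
    simp at h0
  · intro n
    by_cases hn : n = 1
    · subst hn
      have hU : U (lp.single 2 1 (1 : ℝ)) = (1 / Real.sqrt 2) • x := by
        ext m
        rw [lp.coeFn_smul, Pi.smul_apply, hxn, smul_eq_mul]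
        obtain ⟨k, rfl | rfl⟩ := Nat.even_or_odd' m
        · rw [hU0, hs, hs]
          have : 2 * k ≠ 1 := by omega
          by_cases hk : k = 0 <;> simp [hk, this]
        · rw [hU1, hs, hs]
          have : 2 * k ≠ 1 := by omega
          by_cases hk : k = 0 <;> simp [hk, this] <;> ring
      have h2 : ⟪T x, U (lp.single 2 1 (1 : ℝ))⟫ = 0 := by
        have h1 := hT x 0
        rw [zero_add] at h1
        rw [hU, inner_smul_right, real_inner_comm, hin, hT0, h1, hxn, hxn]
        norm_num
      rw [h2, mul_zero]
    · have h1 : ⟪x, U (lp.single 2 n (1 : ℝ))⟫ = 0 := by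
        have a := hU0 (lp.single 2 n (1 : ℝ)) 0
        have b := hU1 (lp.single 2 n (1 : ℝ)) 0
        simp only [mul_zero, zero_add] at a b
        rw [hin, a, b, hs, hs, if_neg (Ne.symm hn)]
        ring
      rw [h1, zero_mul]
end

section
/- Let T be the bounded linear operator on ℓ² acting on each consecutive pair of coordinates by (T x)_{2k} = x_{2k} − x_{2k+1} and (T x)_{2k+1} = x_{2k} + x_{2k+1}, and let U be the unitary operator on ℓ² defined by (U x)_{2k} = (x_{2k} + x_{2k+1})/√2 and (U x)_{2k+1} = (x_{2k} − x_{2k+1})/√2. Then T is a P-operator relative to the orthonormal basis {U e_n}, i.e., for every x ∈ ℓ², if ⟨x, U e_n⟩·⟨T x, U e_n⟩ ≤ 0 for all n, then x = 0; moreover T∘U ≠ U∘T. -/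
local notation "⟪" x ", " y "⟫" => @inner ℝ _ _ x y

/-- The operator `T` on `ℓ²` acting pairwise by `(Tx)_{2k} = x_{2k} - x_{2k+1}`,
`(Tx)_{2k+1} = x_{2k} + x_{2k+1}` is a P-operator relative to the orthonormal basis
`{U e_n}`, where `U` is the Hadamard rotation on each consecutive pair of coordinates and
`{e_n}` is the standard orthonormal basis; moreover `T` and `U` do not commute. -/
theorem pairwise_rotation_pOperator_rotated_basis_and_not_commute
    (T U : lp (fun _ : ℕ => ℝ) 2 →L[ℝ] lp (fun _ : ℕ => ℝ) 2)
    (hT0 : ∀ (x : lp (fun _ : ℕ => ℝ) 2) (k : ℕ),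
      T x (2 * k) = x (2 * k) - x (2 * k + 1))
    (hT1 : ∀ (x : lp (fun _ : ℕ => ℝ) 2) (k : ℕ),
      T x (2 * k + 1) = x (2 * k) + x (2 * k + 1))
    (hUunitary : U ∈ unitary (lp (fun _ : ℕ => ℝ) 2 →L[ℝ] lp (fun _ : ℕ => ℝ) 2))
    (hU0 : ∀ (x : lp (fun _ : ℕ => ℝ) 2) (k : ℕ),
      U x (2 * k) = (x (2 * k) + x (2 * k + 1)) / Real.sqrt 2)
    (hU1 : ∀ (x : lp (fun _ : ℕ => ℝ) 2) (k : ℕ),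
      U x (2 * k + 1) = (x (2 * k) - x (2 * k + 1)) / Real.sqrt 2) :
    (∀ x : lp (fun _ : ℕ => ℝ) 2,
      (∀ n : ℕ, ⟪x, U (lp.single 2 n (1 : ℝ))⟫ * ⟪T x, U (lp.single 2 n (1 : ℝ))⟫ ≤ 0) →
      x = 0) ∧ T ∘L U ≠ U ∘L T := by
  have h2 : Real.sqrt 2 * Real.sqrt 2 = 2 := Real.mul_self_sqrt (by norm_num)
  have hs : Real.sqrt 2 ≠ 0 := by positivity
  have hUU : ∀ x, U (U x) = x := by
    intro x
    ext n
    obtain ⟨k, rfl | rfl⟩ := Nat.even_or_odd' n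
    · rw [hU0, hU0, hU1]
      field_simp
      rw [pow_two, h2]; ring
    · rw [hU1, hU0, hU1]
      field_simp
      rw [pow_two, h2]; ring
  have hin : ∀ x y, ⟪U x, U y⟫ = ⟪x, y⟫ := fun x y =>
    ContinuousLinearMap.inner_map_map_of_mem_unitary hUunitary x y
  have key : ∀ x (n : ℕ), ⟪x, U (lp.single 2 n (1 : ℝ))⟫ = U x n := by
    intro x n
    have := hin (U x) (lp.single 2 n (1 : ℝ))
    rw [hUU] at this
    rw [this, lp.inner_single_right]
    simp
  refine ⟨fun x hx => ?_, fun h => ?_⟩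
  · have hk : ∀ k, x (2 * k) = 0 ∧ x (2 * k + 1) = 0 := by
      intro k
      have a0 := hx (2 * k)
      have a1 := hx (2 * k + 1)
      rw [key, key, hU0, hU0, hT0, hT1, div_mul_div_comm, h2] at a0
      rw [key, key, hU1, hU1, hT0, hT1, div_mul_div_comm, h2] at a1
      constructor <;> nlinarith [sq_nonneg (x (2 * k)), sq_nonneg (x (2 * k + 1))]
    ext n
    obtain ⟨k, rfl | rfl⟩ := Nat.even_or_odd' n
    · simpa using (hk k).1
    · simpa using (hk k).2
  · have h0 : T (U (lp.single 2 0 (1 : ℝ))) (2 * 0) = U (T (lp.single 2 0 (1 : ℝ))) (2 * 0) := by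
      have := congrArg (fun A => A (lp.single 2 0 (1 : ℝ)) (2 * 0)) h
      simpa using this
    rw [hT0, hU0, hU0, hU1, hT0, hT1] at h0
    field_simp at h0
    simp at h0
    norm_num at h0
end

section
/- Let T be the bounded linear operator on ℓ² defined by (T x)_n = x_n/(n+1). Then T is a P-operator relative to the standard orthonormal basis of ℓ², but T is not invertible (it does not admit a bounded linear inverse; in particular T is not surjective). -/
/-- The operator `T` on `ℓ²` given by `(Tx)_n = x_n / (n+1)` is a P-operator relative to
the standard orthonormal basis, but it is not invertible: it has no bounded linear inverse,
and in particular it is not surjective. -/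
theorem diagonal_reciprocal_pOperator_not_invertible
    (T : lp (fun _ : ℕ => ℝ) 2 →L[ℝ] lp (fun _ : ℕ => ℝ) 2)
    (hT : ∀ (x : lp (fun _ : ℕ => ℝ) 2) (n : ℕ), T x n = x n / ((n : ℝ) + 1)) :
    (∀ x : lp (fun _ : ℕ => ℝ) 2, (∀ n : ℕ, x n * T x n ≤ 0) → x = 0) ∧
    (¬ ∃ S : lp (fun _ : ℕ => ℝ) 2 →L[ℝ] lp (fun _ : ℕ => ℝ) 2,
        S ∘L T = ContinuousLinearMap.id ℝ (lp (fun _ : ℕ => ℝ) 2) ∧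
        T ∘L S = ContinuousLinearMap.id ℝ (lp (fun _ : ℕ => ℝ) 2)) ∧
    ¬ Function.Surjective T := by
  have hns : ¬ Function.Surjective T := by
    intro hs
    have hy : Memℓp (fun n : ℕ => (1 : ℝ) / ((n : ℝ) + 1)) 2 := by
      apply memℓp_gen
      have h := (summable_nat_add_iff 1).2 (Real.summable_one_div_nat_pow.2 (one_lt_two))
      refine h.congr ?_
      intro n
      have h0 : (0 : ℝ) ≤ 1 / ((n : ℝ) + 1) := by positivity
      rw [Real.norm_of_nonneg h0]
      simp
    obtain ⟨x, hx⟩ := hs ⟨_, hy⟩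
    have hx1 : ∀ n : ℕ, x n = 1 := by
      intro n
      have h1 := hT x n
      rw [hx] at h1
      have h2 : (1 : ℝ) / ((n : ℝ) + 1) = x n / ((n : ℝ) + 1) := h1
      have h0 : (n : ℝ) + 1 ≠ 0 := by positivity
      field_simp at h2
      exact h2.symm
    have h3 := (lp.memℓp x).summable (by norm_num)
    simp only [hx1, norm_one, Real.one_rpow] at h3
    exact one_ne_zero (tendsto_nhds_unique tendsto_const_nhds h3.tendsto_atTop_zero)
  refine ⟨?_, ?_, hns⟩
  · intro x hx
    ext n
    have h := hx n
    rw [hT, ← mul_div_assoc] at h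
    have h0 : (0 : ℝ) < (n : ℝ) + 1 := by positivity
    rw [div_le_iff₀ h0, zero_mul] at h
    exact mul_self_eq_zero.1 (le_antisymm h (mul_self_nonneg _))
  · rintro ⟨S, -, h⟩
    exact hns fun y => ⟨S y, by simpa using congrArg (fun F => F y) h⟩
end

section
/- Let T be the bounded linear operator on ℓ² defined by (T x)_0 = x_0 − 7 x_1 and (T x)_n = x_n for n ≥ 1. Then T is a P-operator relative to the standard orthonormal basis of ℓ², but T is not positive definite: there exists a nonzero x ∈ ℓ² (e.g., x = (1, 1, 0, 0, …)) with ⟨T x, x⟩ < 0. -/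
local notation "⟪" x ", " y "⟫" => @inner ℝ _ _ x y

/-- The operator `T` on `ℓ²` given by `(Tx)_0 = x_0 - 7 x_1` and `(Tx)_n = x_n` for `n ≥ 1`
is a P-operator relative to the standard orthonormal basis, but it is not positive
definite. -/
theorem pOperator_not_positive_definite
    (T : lp (fun _ : ℕ => ℝ) 2 →L[ℝ] lp (fun _ : ℕ => ℝ) 2)
    (hT0 : ∀ x : lp (fun _ : ℕ => ℝ) 2, T x 0 = x 0 - 7 * x 1)
    (hT : ∀ (x : lp (fun _ : ℕ => ℝ) 2) (n : ℕ), T x (n + 1) = x (n + 1)) :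
    (∀ x : lp (fun _ : ℕ => ℝ) 2, (∀ n : ℕ, x n * T x n ≤ 0) → x = 0) ∧
    ∃ x : lp (fun _ : ℕ => ℝ) 2, x ≠ 0 ∧ ⟪T x, x⟫ < 0 := by
  constructor
  · intro x h
    have h1 : ∀ n : ℕ, x (n + 1) = 0 := by
      intro n
      have := h (n + 1)
      rw [hT] at this
      exact mul_self_eq_zero.mp (le_antisymm this (mul_self_nonneg _))
    have h0 : x 0 = 0 := by
      have := h 0
      have h2 : x 1 = 0 := h1 0
      rw [hT0, h2, mul_zero, sub_zero] at this
      exact mul_self_eq_zero.mp (le_antisymm this (mul_self_nonneg _))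
    ext n
    cases n with
    | zero => simpa using h0
    | succ k => simpa using h1 k
  · set x : lp (fun _ : ℕ => ℝ) 2 :=
      lp.single 2 (0 : ℕ) (1 : ℝ) + lp.single 2 (1 : ℕ) (1 : ℝ) with hx
    have x0 : x 0 = 1 := by simp [hx, lp.single_apply]
    have x1 : x 1 = 1 := by simp [hx, lp.single_apply]
    refine ⟨x, ?_, ?_⟩
    · intro h
      rw [h] at x0
      simp at x0
    · have t1 : T x 1 = x 1 := hT x 0
      have key : ∀ y : lp (fun _ : ℕ => ℝ) 2, ⟪y, x⟫ = y 0 + y 1 := by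
        intro y
        rw [hx, inner_add_right, lp.inner_single_right, lp.inner_single_right]
        simp
      rw [key, hT0, t1, x0, x1]
      norm_num
end
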